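/- For all integers α ≥ 3 and β ≥ 1, the PSD-throttling number of the balanced spider satisfies th₊(T_{α,β}) = ⌈t_S(α,β)⌉. -/

import Mathlib

open SimpleGraph

/-- `v` PSD-forces `w` given blue set `B`: `v` is blue, adjacent to the white vertex `w`,
and `w` is the only white neighbor of `v` in the component of `G - B` containing `w`. -/
def psdForces {V : Type*} (G : SimpleGraph V) (B : Set V) (v w : V) : Prop :=
  v ∈ B ∧ G.Adj v w ∧ ∃ hw : w ∉ B,
    ∀ (u : V) (hu : u ∉ B), G.Adj v u →
      (G.induce {x | x ∉ B}).Reachable ⟨u, hu⟩ ⟨w, hw⟩ → u = w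

/-- One time-step of PSD forcing: all forceable white vertices become blue simultaneously. -/
def psdStep {V : Type*} (G : SimpleGraph V) (B : Set V) : Set V :=
  B ∪ {w | ∃ v, psdForces G B v w}

/-- `B` is a PSD-forcing set of `G` if iterating the PSD color change rule colors all of `V`. -/
def IsPSDForcing {V : Type*} (G : SimpleGraph V) (B : Set V) : Prop :=
  ∃ t, (psdStep G)^[t] B = Set.univ

/-- The PSD-propagation time of `B` in `G`. -/
noncomputable def psdPt {V : Type*} (G : SimpleGraph V) (B : Set V) : ℕ :=
  sInf {t | (psdStep G)^[t] B = Set.univ}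

/-- The PSD-throttling number of `G`. -/
noncomputable def psdTh {V : Type*} (G : SimpleGraph V) : ℕ :=
  sInf {k | ∃ B : Finset V, IsPSDForcing G ↑B ∧ k = B.card + psdPt G ↑B}

/-- The weighted PSD-throttling number of `(G, w)`. -/
noncomputable def psdThW {V : Type*} (G : SimpleGraph V) (w : V → ℕ) : ℕ :=
  sInf {k | ∃ B : Finset V, IsPSDForcing G ↑B ∧ k = (∑ x ∈ B, w x) + psdPt G ↑B}

/-- The spider `S(l₀, …, l_{k-1})`: a center vertex `none` adjacent to the first vertex
of each of `k` disjoint paths, the `i`-th of order `l i`. -/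
def spider (k : ℕ) (l : Fin k → ℕ) : SimpleGraph (Option ((i : Fin k) × Fin (l i))) :=
  SimpleGraph.fromRel (fun x y =>
    (∃ (i : Fin k) (j : Fin (l i)), (j : ℕ) = 0 ∧ x = none ∧ y = some ⟨i, j⟩) ∨
    (∃ (i : Fin k) (j j' : Fin (l i)), (j' : ℕ) = (j : ℕ) + 1 ∧
      x = some ⟨i, j⟩ ∧ y = some ⟨i, j'⟩))

/-- The balanced spider `T_{α,β}` with `α` legs each of order `β`. -/
abbrev balancedSpider (α β : ℕ) : SimpleGraph (Option ((_ : Fin α) × Fin β)) :=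
  spider α (fun _ => β)


/-- `ŝ(α,β) = ⌊√((2β + α + 1)/(4α))⌋`. -/
noncomputable def sHat (α : ℤ) (β : ℝ) : ℤ :=
  ⌊Real.sqrt ((2 * β + (α : ℝ) + 1) / (4 * (α : ℝ)))⌋

/-- `t_S(α,β) = 1 + α·ŝ(α,β) + (β + 1/2)/(2ŝ(α,β) + 1) - 1/2`, the continuous variant of the
PSD-throttling number of the balanced spider `T_{α,β}`. -/
noncomputable def tS (α : ℤ) (β : ℝ) : ℝ :=
  1 + (α : ℝ) * (sHat α β : ℝ) + (β + 1 / 2) / (2 * (sHat α β : ℝ) + 1) - 1 / 2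

/-!
In a forest two white neighbors of a blue vertex never lie in one white component, so a blue vertex
forces all of its white neighbors at once. Hence after `t` steps exactly the vertices at distance at
most `t` from `B` are blue, and the throttling number is the minimum of `|B| + r` over the
distance-`r` dominating sets `B`.

On a spider, the center together with `s` vertices on each leg dominates at distance `r` as soon as
`β ≤ (2s + 1) r + s`, at cost `1 + α s + r`. Conversely, let `B` be a distance-`r` dominating set.
Folding the spider onto a line so that one leg becomes positive and all others negative does not
increase distances, so covering an interval by balls of `2r + 1` points bounds the number of
elements of `B` on that leg from below. The only case in which this does not produce a pair `(s, r)`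
of at most the same cost is when `B` avoids the center and has the same number of elements on all
legs; there two legs are counted together, and one center per leg is traded for two time-steps.

For fixed `s` the least admissible `r` is a ceiling, so it remains to minimize
`1 + α s + (β + 1/2) / (2s + 1) - 1/2` over the natural numbers `s`.
-/

section General

variable {V : Type*} {G : SimpleGraph V}

lemma edist_le_natCast_iff {u v : V} {n : ℕ} :
    G.edist u v ≤ n ↔ ∃ p : G.Walk u v, p.length ≤ n := by
  refine ⟨fun h ↦ ?_, fun ⟨p, hp⟩ ↦ (edist_le p).trans (by exact_mod_cast hp)⟩
  obtain ⟨p, hp⟩ := exists_walk_of_edist_ne_top (ne_top_of_le_ne_top (ENat.natCast_ne_top n) h)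
  exact ⟨p, by exact_mod_cast hp.trans_le h⟩

lemma edist_le_natCast_succ_iff {u v : V} {n : ℕ} :
    G.edist u v ≤ (n + 1 : ℕ) ↔ ∃ w, G.edist u w ≤ n ∧ (w = v ∨ G.Adj w v) := by
  constructor
  · rw [edist_le_natCast_iff]
    rintro ⟨p, hp⟩
    refine ⟨p.penultimate, edist_le_natCast_iff.2 ⟨p.dropLast, ?_⟩, ?_⟩
    · rw [Walk.length_dropLast]
      omega
    · by_cases hnil : p.Nil
      · exact Or.inl (hnil.eq ▸ by cases hnil; rfl)
      · exact Or.inr (p.adj_penultimate hnil)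
  · rintro ⟨w, hw, hwv⟩
    calc G.edist u v ≤ G.edist u w + G.edist w v := G.edist_triangle
      _ ≤ (n + 1 : ℕ) := by
        push_cast
        exact add_le_add hw (edist_le_one_iff_adj_or_eq.2 hwv.symm)

lemma abs_sub_le_of_edist_le {φ : V → ℤ} (hφ : ∀ ⦃u v⦄, G.Adj u v → |φ u - φ v| ≤ 1)
    {u v : V} {n : ℕ} (h : G.edist u v ≤ n) : |φ u - φ v| ≤ n := by
  obtain ⟨p, hp⟩ := edist_le_natCast_iff.1 h
  suffices |φ u - φ v| ≤ p.length from this.trans (by exact_mod_cast hp)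
  clear hp h
  induction p with
  | nil => simp
  | @cons u w v huw p ih =>
    calc |φ u - φ v| ≤ |φ u - φ w| + |φ w - φ v| := abs_sub_le _ _ _
      _ ≤ (Walk.cons huw p).length := by
        rw [Walk.length_cons]
        push_cast
        linarith [hφ huw]

/-- A vertex of maximal height on a cycle would have two distinct neighbors no higher than
itself. -/
lemma isAcyclic_of_unique_lower_neighbor (height : V → ℕ)
    (h : ∀ ⦃u v w⦄, G.Adj v u → G.Adj v w → height u ≤ height v → height w ≤ height v → u = w) :
    G.IsAcyclic := by
  classical
  intro a c hc
  obtain ⟨v, hv, hmax⟩ := c.support.toFinset.exists_max_image height ⟨a, by simp⟩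
  rw [List.mem_toFinset] at hv
  have hle {u} (hu : u ∈ (c.rotate v hv).support) : height u ≤ height v :=
    hmax u (by simpa using hu)
  have hcyc := hc.rotate hv
  exact hcyc.snd_ne_penultimate <|
    h (Walk.adj_snd hcyc.not_nil) (Walk.adj_penultimate hcyc.not_nil).symm
      (hle (Walk.getVert_mem_support _ _)) (hle (Walk.getVert_mem_support _ _))

lemma card_Icc_le_of_forall_exists_abs_sub_le {ι : Type*} {C : Finset ι} {φ : ι → ℤ} {a b : ℤ}
    {r : ℕ} (h : ∀ x ∈ Finset.Icc a b, ∃ c ∈ C, |φ c - x| ≤ r) :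
    b + 1 - a ≤ C.card * (2 * r + 1) := by
  have hsub : Finset.Icc a b ⊆ C.biUnion fun c ↦ Finset.Icc (φ c - r) (φ c + r) := by
    intro x hx
    obtain ⟨c, hc, hcx⟩ := h x hx
    rw [abs_le] at hcx
    simp only [Finset.mem_biUnion, Finset.mem_Icc]
    exact ⟨c, hc, by omega, by omega⟩
  have hcard : (Finset.Icc a b).card ≤ C.card * (2 * r + 1) :=
    (Finset.card_le_card hsub).trans <| Finset.card_biUnion_le_card_mul _ _ _ fun c _ ↦ by
      rw [Int.card_Icc]
      omega
  rw [Int.card_Icc] at hcard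
  zify at hcard
  omega

/-- `B` is a distance-`r` dominating set of `G`: every vertex is within distance `r` of `B`. The
extended distance is used, as `G.dist` is `0` between different components. -/
def IsDistDominating (G : SimpleGraph V) (B : Set V) (r : ℕ) : Prop :=
  ∀ v, ∃ b ∈ B, G.edist b v ≤ r

/-- If `v` has two neighbors `u` and `w` in one component of `G - B`, then `v` followed by a path
from `u` to `w` in that component closes a cycle. -/
lemma psdForces_of_isAcyclic (hG : G.IsAcyclic) {B : Set V} {v w : V} (hv : v ∈ B) (hw : w ∉ B)
    (hvw : G.Adj v w) : psdForces G B v w := by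
  refine ⟨hv, hvw, hw, fun u hu hvu huw ↦ ?_⟩
  obtain ⟨p, hp⟩ := huw.exists_isPath
  have hp' : (p.map (Embedding.induce _).toHom).IsPath := hp.map Subtype.val_injective
  have hvp : v ∉ (p.map (Embedding.induce {x | x ∉ B}).toHom).support := by
    rw [Walk.support_map, List.mem_map]
    rintro ⟨x, -, rfl⟩
    exact x.2 hv
  have hsnd := hG.eq_snd_of_adj_start ((Walk.cons_isPath_iff hvu _).2 ⟨hp', hvp⟩) hvw (by simp)
  exact (hsnd.trans (Walk.snd_cons _ _)).symm

lemma mem_psdStep_iff_of_isAcyclic (hG : G.IsAcyclic) {B : Set V} {w : V} :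
    w ∈ psdStep G B ↔ ∃ v ∈ B, v = w ∨ G.Adj v w := by
  constructor
  · rintro (hw | ⟨v, hv, hvw, -⟩)
    · exact ⟨w, hw, Or.inl rfl⟩
    · exact ⟨v, hv, Or.inr hvw⟩
  · rintro ⟨v, hv, rfl | hvw⟩
    · exact Or.inl hv
    · by_cases hw : w ∈ B
      · exact Or.inl hw
      · exact Or.inr ⟨v, psdForces_of_isAcyclic hG hv hw hvw⟩

lemma mem_iterate_psdStep_iff_of_isAcyclic (hG : G.IsAcyclic) {B : Set V} {t : ℕ} {v : V} :
    v ∈ (psdStep G)^[t] B ↔ ∃ b ∈ B, G.edist b v ≤ t := by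
  induction t generalizing v with
  | zero => simp
  | succ t ih =>
    simp only [Function.iterate_succ_apply', mem_psdStep_iff_of_isAcyclic hG, ih,
      edist_le_natCast_succ_iff]
    grind

lemma iterate_psdStep_eq_univ_iff_of_isAcyclic (hG : G.IsAcyclic) {B : Set V} {t : ℕ} :
    (psdStep G)^[t] B = Set.univ ↔ IsDistDominating G B t := by
  simp only [Set.eq_univ_iff_forall, mem_iterate_psdStep_iff_of_isAcyclic hG, IsDistDominating]

lemma psdTh_le_of_isDistDominating (hG : G.IsAcyclic) {B : Finset V} {r : ℕ}
    (h : IsDistDominating G B r) : psdTh G ≤ B.card + r := by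
  have hr := (iterate_psdStep_eq_univ_iff_of_isAcyclic hG).2 h
  have hpt : psdPt G B ≤ r := Nat.sInf_le hr
  calc psdTh G ≤ B.card + psdPt G B := Nat.sInf_le ⟨B, ⟨r, hr⟩, rfl⟩
    _ ≤ B.card + r := by gcongr

lemma exists_isDistDominating_psdTh_eq [Finite V] (hG : G.IsAcyclic) :
    ∃ (B : Finset V) (r : ℕ), IsDistDominating G B r ∧ psdTh G = B.card + r := by
  have := Fintype.ofFinite V
  obtain ⟨B, hB, hcard⟩ : psdTh G ∈ {k | ∃ B : Finset V, IsPSDForcing G B ∧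
      k = B.card + psdPt G B} :=
    Nat.sInf_mem ⟨_, Finset.univ, ⟨0, by simp⟩, rfl⟩
  exact ⟨B, psdPt G B, (iterate_psdStep_eq_univ_iff_of_isAcyclic hG).1 (Nat.sInf_mem hB), hcard⟩

end General

namespace spider

variable {k : ℕ}

/-- The vertex type of the spider with leg orders `l`; `none` is the center. -/
abbrev Vertex (l : Fin k → ℕ) : Type := Option ((i : Fin k) × Fin (l i))

/-- The vertex at distance `d` from the center on the `i`-th leg, and the last vertex of that leg
(the center, if the leg is empty) when the leg is shorter than `d`. This clamping makes
`legVertex l i` a `1`-Lipschitz map on all of `ℕ`. -/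
def legVertex (l : Fin k → ℕ) (i : Fin k) : ℕ → Vertex l
  | 0 => none
  | d + 1 => if h : d < l i then some ⟨i, d, h⟩ else legVertex l i d

variable {l : Fin k → ℕ}

/-- The distance from a vertex of the spider to the center. -/
def depth : Vertex l → ℕ
  | none => 0
  | some ⟨_, d⟩ => d + 1

/-- The folding of the spider onto a line that sends the `i`-th leg to the positive integers and
every other leg to the negative integers. -/
def legCoord (i : Fin k) : Vertex l → ℤ
  | none => 0
  | some ⟨j, d⟩ => if j = i then d + 1 else -(d + 1)

lemma legVertex_succ {i : Fin k} {d : ℕ} (hd : d < l i) :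
    legVertex l i (d + 1) = some ⟨i, d, hd⟩ := by
  simp only [legVertex, hd, dite_true]

lemma eq_none_or_exists_eq_legVertex_succ (v : Vertex l) :
    v = none ∨ ∃ i, ∃ d < l i, v = legVertex l i (d + 1) := by
  rcases v with _ | ⟨i, d, hd⟩
  · exact Or.inl rfl
  · exact Or.inr ⟨i, d, hd, (legVertex_succ hd).symm⟩

lemma depth_legVertex {i : Fin k} {d : ℕ} (hd : d ≤ l i) : depth (legVertex l i d) = d := by
  cases d with
  | zero => rfl
  | succ d => rw [legVertex_succ hd, depth]

lemma legCoord_legVertex (i : Fin k) {j : Fin k} {d : ℕ} (hd : d ≤ l j) :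
    legCoord i (legVertex l j d) = if j = i then (d : ℤ) else -d := by
  cases d with
  | zero => simp [legVertex, legCoord]
  | succ d => simp only [legVertex_succ hd, legCoord, Nat.cast_add, Nat.cast_one]

lemma abs_legCoord (i : Fin k) (v : Vertex l) : |legCoord i v| = depth v := by
  rcases v with _ | ⟨j, d⟩
  · rfl
  · simp only [legCoord, depth]
    split_ifs <;> grind

lemma exists_legCoord_pos {v : Vertex l} (hv : v ≠ none) : ∃ i, 0 < legCoord i v := by
  obtain ⟨⟨i, d⟩, rfl⟩ := Option.ne_none_iff_exists'.1 hv
  exact ⟨i, by simp only [legCoord, if_true]; omega⟩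

lemma eq_of_legCoord_pos {i j : Fin k} {v : Vertex l} (hi : 0 < legCoord i v)
    (hj : 0 < legCoord j v) : i = j := by
  rcases v with _ | ⟨a, d⟩
  · simp [legCoord] at hi
  · simp only [legCoord] at hi hj
    grind

lemma adj_iff {u v : Vertex l} : (spider k l).Adj u v ↔ ∃ i, ∃ d < l i,
    (u = legVertex l i d ∧ v = legVertex l i (d + 1)) ∨
      (v = legVertex l i d ∧ u = legVertex l i (d + 1)) := by
  constructor
  · have hedge {x y : Vertex l} :
        ((∃ (i : Fin k) (j : Fin (l i)), (j : ℕ) = 0 ∧ x = none ∧ y = some ⟨i, j⟩) ∨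
          ∃ (i : Fin k) (j j' : Fin (l i)), (j' : ℕ) = j + 1 ∧ x = some ⟨i, j⟩ ∧
            y = some ⟨i, j'⟩) →
        ∃ i, ∃ d < l i, x = legVertex l i d ∧ y = legVertex l i (d + 1) := by
      rintro (⟨i, ⟨d, hd⟩, rfl, rfl, rfl⟩ | ⟨i, ⟨d, hd⟩, ⟨_, hd'⟩, rfl, rfl, rfl⟩)
      · exact ⟨i, 0, hd, rfl, (legVertex_succ hd).symm⟩
      · exact ⟨i, d + 1, hd', (legVertex_succ hd).symm, (legVertex_succ hd').symm⟩
    rintro ⟨-, huv | hvu⟩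
    · obtain ⟨i, d, hd, h⟩ := hedge huv
      exact ⟨i, d, hd, Or.inl h⟩
    · obtain ⟨i, d, hd, h⟩ := hedge hvu
      exact ⟨i, d, hd, Or.inr h⟩
  · have hadj {i : Fin k} {d : ℕ} (hd : d < l i) :
        (spider k l).Adj (legVertex l i d) (legVertex l i (d + 1)) := by
      refine ⟨fun h ↦ ?_, Or.inl ?_⟩
      · simpa [depth_legVertex hd, depth_legVertex hd.le] using congrArg depth h
      · cases d with
        | zero => exact Or.inl ⟨i, ⟨0, hd⟩, rfl, rfl, legVertex_succ hd⟩
        | succ d =>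
          have hd' := d.lt_succ_self.trans hd
          exact Or.inr ⟨i, ⟨d, hd'⟩, ⟨d + 1, hd⟩, rfl, legVertex_succ hd', legVertex_succ hd⟩
    rintro ⟨i, d, hd, ⟨rfl, rfl⟩ | ⟨rfl, rfl⟩⟩
    · exact hadj hd
    · exact (hadj hd).symm

lemma exists_eq_legVertex_of_adj_of_depth_le {u v : Vertex l} (h : (spider k l).Adj v u)
    (hle : depth u ≤ depth v) :
    ∃ i, ∃ d < l i, u = legVertex l i d ∧ v = legVertex l i (d + 1) := by
  obtain ⟨i, d, hd, ⟨rfl, rfl⟩ | huv⟩ := adj_iff.1 h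
  · rw [depth_legVertex hd, depth_legVertex hd.le] at hle
    omega
  · exact ⟨i, d, hd, huv⟩

lemma isAcyclic : (spider k l).IsAcyclic := by
  refine isAcyclic_of_unique_lower_neighbor depth fun u v w hu hw hule hwle ↦ ?_
  obtain ⟨i, d, hd, rfl, hv⟩ := exists_eq_legVertex_of_adj_of_depth_le hu hule
  obtain ⟨j, e, he, rfl, hv'⟩ := exists_eq_legVertex_of_adj_of_depth_le hw hwle
  rw [hv, legVertex_succ hd, legVertex_succ he] at hv'
  simp only [Option.some.injEq, Sigma.mk.injEq] at hv'
  obtain ⟨rfl, hde⟩ := hv'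
  simp only [heq_eq_eq, Fin.mk.injEq] at hde
  rw [hde]

lemma edist_legVertex_add_le (i : Fin k) (d n : ℕ) :
    (spider k l).edist (legVertex l i d) (legVertex l i (d + n)) ≤ n := by
  induction n with
  | zero => simp
  | succ n ih =>
    refine edist_le_natCast_succ_iff.2 ⟨_, ih, ?_⟩
    by_cases hd : d + n < l i
    · exact Or.inr (adj_iff.2 ⟨i, d + n, hd, Or.inl ⟨rfl, rfl⟩⟩)
    · exact Or.inl (by rw [← add_assoc, legVertex, dif_neg hd])

lemma edist_legVertex_le {i : Fin k} {d e r : ℕ} (hde : d ≤ e + r) (hed : e ≤ d + r) :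
    (spider k l).edist (legVertex l i d) (legVertex l i e) ≤ r := by
  rcases le_total d e with h | h
  · obtain ⟨n, rfl⟩ := Nat.exists_eq_add_of_le h
    exact (edist_legVertex_add_le i d n).trans (Nat.cast_le.2 (by omega))
  · obtain ⟨n, rfl⟩ := Nat.exists_eq_add_of_le h
    rw [edist_comm]
    exact (edist_legVertex_add_le i e n).trans (Nat.cast_le.2 (by omega))

lemma abs_legCoord_sub_le (i : Fin k) {u v : Vertex l} {n : ℕ}
    (h : (spider k l).edist u v ≤ n) : |legCoord i u - legCoord i v| ≤ n := by
  refine abs_sub_le_of_edist_le (fun x y hxy ↦ ?_) h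
  obtain ⟨j, d, hd, ⟨rfl, rfl⟩ | ⟨rfl, rfl⟩⟩ := adj_iff.1 hxy <;>
  · rw [legCoord_legVertex i hd, legCoord_legVertex i hd.le]
    split_ifs <;> grind

/-- On each leg the centers are the vertices at depths `0, 2r + 1, 2(2r + 1), …`, where depth `0`
is the common center of the spider; the ones beyond the end of the leg are clamped to its end. -/
lemma psdTh_le {r : ℕ} (s : Fin k → ℕ) (h : ∀ i, l i ≤ (2 * s i + 1) * r + s i) :
    psdTh (spider k l) ≤ 1 + ∑ i, s i + r := by
  classical
  let f : ((i : Fin k) × Fin (s i)) → Vertex l := fun p ↦ legVertex l p.1 ((2 * r + 1) * (p.2 + 1))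
  let B : Finset (Vertex l) := insert none (Finset.univ.image f)
  have hB (i : Fin k) {m : ℕ} (hm : m ≤ s i) : legVertex l i ((2 * r + 1) * m) ∈ B := by
    cases m with
    | zero => exact Finset.mem_insert_self _ _
    | succ m =>
      exact Finset.mem_insert_of_mem (Finset.mem_image_of_mem f (Finset.mem_univ ⟨i, m, hm⟩))
  have hdom : IsDistDominating (spider k l) B r := by
    intro v
    obtain rfl | ⟨i, d, hd, rfl⟩ := eq_none_or_exists_eq_legVertex_succ v
    · exact ⟨none, Finset.mem_insert_self _ _, by simp⟩
    · have hm : (d + 1 + r) / (2 * r + 1) ≤ s i := by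
        rw [← Nat.lt_succ_iff, Nat.div_lt_iff_lt_mul (by omega)]
        linarith [h i]
      have hdiv := Nat.div_add_mod (d + 1 + r) (2 * r + 1)
      have hmod := Nat.mod_lt (d + 1 + r) (show 0 < 2 * r + 1 by omega)
      exact ⟨_, hB i hm, edist_legVertex_le (by omega) (by omega)⟩
  have hcard : B.card ≤ 1 + ∑ i, s i := by
    calc B.card ≤ (Finset.univ.image f).card + 1 := Finset.card_insert_le _ _
      _ ≤ Fintype.card ((i : Fin k) × Fin (s i)) + 1 := by gcongr; exact Finset.card_image_le
      _ = 1 + ∑ i, s i := by simp [add_comm]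
  exact (psdTh_le_of_isDistDominating isAcyclic hdom).trans (by gcongr)

/-- The vertices of `B` on the `i`-th leg, the center excluded. -/
def legPart (B : Finset (Vertex l)) (i : Fin k) : Finset (Vertex l) :=
  B.filter fun b ↦ 0 < legCoord i b

lemma mem_legPart {B : Finset (Vertex l)} {i : Fin k} {b : Vertex l} :
    b ∈ legPart B i ↔ b ∈ B ∧ 0 < legCoord i b :=
  Finset.mem_filter

lemma sum_card_legPart_le (B : Finset (Vertex l)) :
    ∑ i, (legPart B i).card ≤ (B.erase none).card := by
  rw [← Finset.card_biUnion fun i _ j _ hij ↦ Finset.disjoint_left.2 fun b hi hj ↦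
    hij (eq_of_legCoord_pos (mem_legPart.1 hi).2 (mem_legPart.1 hj).2)]
  refine Finset.card_le_card fun b hb ↦ ?_
  obtain ⟨i, -, hbi⟩ := Finset.mem_biUnion.1 hb
  obtain ⟨hbB, hpos⟩ := mem_legPart.1 hbi
  refine Finset.mem_erase.2 ⟨?_, hbB⟩
  rintro rfl
  simp [legCoord] at hpos

/-- A vertex deeper than `r` on the `i`-th leg can only be dominated from that leg. -/
lemma le_card_legPart_mul {B : Finset (Vertex l)} {r : ℕ}
    (hB : IsDistDominating (spider k l) B r) (i : Fin k) :
    l i ≤ (legPart B i).card * (2 * r + 1) + r := by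
  suffices (l i : ℤ) + 1 - (r + 1) ≤ (legPart B i).card * (2 * r + 1) by
    zify
    linarith
  refine card_Icc_le_of_forall_exists_abs_sub_le (φ := legCoord i) fun x hx ↦ ?_
  rw [Finset.mem_Icc] at hx
  lift x to ℕ using by omega
  have hxl : x ≤ l i := by omega
  obtain ⟨b, hb, hbx⟩ := hB (legVertex l i x)
  have hdist := abs_legCoord_sub_le i hbx
  rw [legCoord_legVertex i hxl, if_pos rfl] at hdist
  exact ⟨b, mem_legPart.2 ⟨hb, by grind⟩, hdist⟩

/-- Let `m ∈ B` have minimal depth. A vertex of the `i`-th or `j`-th leg that is dominated from a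
third leg is dominated through the center, so it stays within distance `r` of `m` after folding. -/
lemma exists_legPart_union_abs_legCoord_sub_le {B : Finset (Vertex l)} {r : ℕ} {i j : Fin k}
    {m v : Vertex l} (hB : IsDistDominating (spider k l) B r) (hnone : none ∉ B)
    (hm : m ∈ legPart B j) (hmin : ∀ b ∈ B, depth m ≤ depth b)
    (hv : ∀ a, a ≠ i → a ≠ j → legCoord a v ≤ 0) :
    ∃ c ∈ legPart B i ∪ legPart B j, |legCoord i c - legCoord i v| ≤ r := by
  obtain ⟨b, hb, hbv⟩ := hB v
  by_cases hbC : b ∈ legPart B i ∪ legPart B j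
  · exact ⟨b, hbC, abs_legCoord_sub_le i hbv⟩
  obtain ⟨a, ha⟩ := exists_legCoord_pos fun h : b = none ↦ hnone (h ▸ hb)
  have hai : a ≠ i := fun h ↦ hbC (Finset.mem_union_left _ (mem_legPart.2 ⟨hb, h ▸ ha⟩))
  have haj : a ≠ j := fun h ↦ hbC (Finset.mem_union_right _ (mem_legPart.2 ⟨hb, h ▸ ha⟩))
  have hsum : (depth b + depth v : ℤ) ≤ r := by
    have := abs_legCoord_sub_le a hbv
    have := hv a hai haj
    rw [← abs_legCoord a b, ← abs_legCoord a v]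
    grind
  refine ⟨m, Finset.mem_union_right _ hm, ?_⟩
  calc |legCoord i m - legCoord i v| ≤ |legCoord i m| + |legCoord i v| := abs_sub _ _
    _ = depth m + depth v := by rw [abs_legCoord, abs_legCoord]
    _ ≤ depth b + depth v := by gcongr; exact hmin b hb
    _ ≤ r := hsum

lemma exists_forall_ne_le_card_legPart_add_mul {B : Finset (Vertex l)} {r : ℕ}
    (hB : IsDistDominating (spider k l) B r) (hnone : none ∉ B) :
    ∃ j, ∀ i ≠ j,
      l i + l j + 1 ≤ ((legPart B i).card + (legPart B j).card) * (2 * r + 1) := by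
  classical
  obtain ⟨b, hb, -⟩ := hB none
  obtain ⟨m, hm, hmin⟩ := B.exists_min_image depth ⟨b, hb⟩
  obtain ⟨j, hj⟩ := exists_legCoord_pos fun h : m = none ↦ hnone (h ▸ hm)
  refine ⟨j, fun i hij ↦ ?_⟩
  have hcover : ∀ x ∈ Finset.Icc (-(l j) : ℤ) (l i),
      ∃ c ∈ legPart B i ∪ legPart B j, |legCoord i c - x| ≤ r := by
    intro x hx
    rw [Finset.mem_Icc] at hx
    obtain ⟨a, haij, d, hd, hax⟩ :
        ∃ a, (a = i ∨ a = j) ∧ ∃ d ≤ l a, legCoord i (legVertex l a d) = x := by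
      rcases le_total 0 x with h0 | h0
      · have hd : x.toNat ≤ l i := by omega
        exact ⟨i, Or.inl rfl, _, hd, by rw [legCoord_legVertex i hd, if_pos rfl]; omega⟩
      · have hd : (-x).toNat ≤ l j := by omega
        exact ⟨j, Or.inr rfl, _, hd, by rw [legCoord_legVertex i hd, if_neg hij.symm]; omega⟩
    rw [← hax]
    refine exists_legPart_union_abs_legCoord_sub_le hB hnone (mem_legPart.2 ⟨hm, hj⟩) hmin
      fun a' hi hj ↦ ?_
    rw [legCoord_legVertex a' hd, if_neg (by grind)]
    omega
  have hcount := card_Icc_le_of_forall_exists_abs_sub_le hcover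
  have hunion := Finset.card_union_le (legPart B i) (legPart B j)
  zify at hunion ⊢
  calc (l i + l j + 1 : ℤ) = l i + 1 - -(l j) := by ring
    _ ≤ _ := hcount
    _ ≤ _ := by gcongr

end spider

/-- Put one center in the middle of the spider. If `s` centers on each leg then still need the time
`r`, one gets `r < 2 * s`, and so `s - 1` centers on each leg and the time `r + 2` suffice; as
`α ≥ 3`, this is no more expensive. -/
lemma exists_le_of_add_one_le_mul {α β r s : ℕ} (hα : 3 ≤ α) (h : β + 1 ≤ s * (2 * r + 1)) :
    ∃ s' r', β ≤ (2 * s' + 1) * r' + s' ∧ 1 + α * s' + r' ≤ α * s + r := by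
  obtain ⟨s, rfl⟩ := Nat.exists_eq_add_one_of_ne_zero (show s ≠ 0 by rintro rfl; omega)
  by_cases hr : 1 ≤ r ∧ β ≤ (2 * (s + 1) + 1) * (r - 1) + (s + 1)
  · exact ⟨s + 1, r - 1, hr.2, by omega⟩
  · refine ⟨s, r + 2, ?_, by rw [mul_add]; omega⟩
    rcases r with _ | r
    · omega
    · rw [not_and, Nat.add_sub_cancel] at hr
      have hrs : r ≤ 2 * s := by linarith [hr (by omega)]
      linarith

lemma exists_le_of_isDistDominating_balancedSpider {α β r : ℕ} (hα : 3 ≤ α)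
    {B : Finset (Option ((_ : Fin α) × Fin β))}
    (hB : IsDistDominating (balancedSpider α β) B r) :
    ∃ s r', β ≤ (2 * s + 1) * r' + s ∧ 1 + α * s + r' ≤ B.card + r := by
  have : Nontrivial (Fin α) := Fin.nontrivial_iff_two_le.2 (by omega)
  let n (i : Fin α) : ℕ := (spider.legPart B i).card
  obtain ⟨i, -, hmin⟩ := Finset.exists_min_image Finset.univ n Finset.univ_nonempty
  have hleg : β ≤ (2 * n i + 1) * r + n i := by
    linarith [spider.le_card_legPart_mul hB i]
  have hsum : α * n i ≤ ∑ j, n j := by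
    simpa using Finset.card_nsmul_le_sum Finset.univ n (n i) hmin
  have hcard : ∑ j, n j ≤ (B.erase none).card := spider.sum_card_legPart_le B
  by_cases hnone : none ∈ B
  · have := Finset.card_erase_add_one hnone
    exact ⟨n i, r, hleg, by omega⟩
  rw [Finset.erase_eq_of_notMem hnone] at hcard
  by_cases hconst : ∀ j, n j = n i
  · obtain ⟨j, hj⟩ := spider.exists_forall_ne_le_card_legPart_add_mul hB hnone
    obtain ⟨i', hi'⟩ := exists_ne j
    have htwo : β + β + 1 ≤ (n i' + n j) * (2 * r + 1) := hj i' hi'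
    rw [hconst i', hconst j, add_mul] at htwo
    have hshare : β + 1 ≤ n i * (2 * r + 1) := by omega
    obtain ⟨s, r', hs, hle⟩ := exists_le_of_add_one_le_mul hα hshare
    exact ⟨s, r', hs, by omega⟩
  · push Not at hconst
    obtain ⟨j, hj⟩ := hconst
    have hlt : ∑ _ : Fin α, n i < ∑ j, n j :=
      Finset.sum_lt_sum hmin ⟨j, Finset.mem_univ j, (hmin j (Finset.mem_univ j)).lt_of_ne' hj⟩
    rw [Finset.sum_const, Finset.card_univ, Fintype.card_fin, smul_eq_mul] at hlt
    exact ⟨n i, r, hleg, by omega⟩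

theorem isLeast_psdTh_balancedSpider {α : ℕ} (hα : 3 ≤ α) (β : ℕ) :
    IsLeast {t | ∃ s r, β ≤ (2 * s + 1) * r + s ∧ t = 1 + α * s + r}
      (psdTh (balancedSpider α β)) := by
  have hle {s r : ℕ} (h : β ≤ (2 * s + 1) * r + s) :
      psdTh (balancedSpider α β) ≤ 1 + α * s + r := by
    simpa using spider.psdTh_le (fun _ : Fin α ↦ s) fun _ ↦ h
  constructor
  · obtain ⟨B, r, hB, hcard⟩ :=
      exists_isDistDominating_psdTh_eq (spider.isAcyclic (l := fun _ : Fin α ↦ β))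
    obtain ⟨s, r', hsr, hge⟩ := exists_le_of_isDistDominating_balancedSpider hα hB
    exact ⟨s, r', hsr, (hle hsr).antisymm (hcard ▸ hge)⟩
  · rintro t ⟨s, r, hsr, rfl⟩
    exact hle hsr

/-- The continuous relaxation of the cost `1 + α * s + r` of `s` additional centers on each leg of
the balanced spider, with `r` the real solution of `β = (2 * s + 1) * r + s`. -/
noncomputable def spiderCost (α β s : ℕ) : ℝ :=
  1 + α * s + (β + 1 / 2) / (2 * s + 1) - 1 / 2

lemma spiderCost_le_iff {α β s r : ℕ} :
    spiderCost α β s ≤ 1 + α * s + r ↔ β ≤ (2 * s + 1) * r + s := by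
  have hs : (0 : ℝ) < 2 * s + 1 := by positivity
  calc spiderCost α β s ≤ 1 + α * s + r
      ↔ (β + 1 / 2 : ℝ) / (2 * s + 1) ≤ r + 1 / 2 := by
        unfold spiderCost
        constructor <;> intro h <;> linarith
    _ ↔ (β : ℝ) ≤ (2 * s + 1) * r + s := by
        rw [div_le_iff₀ hs]
        constructor <;> intro h <;> linarith
    _ ↔ β ≤ (2 * s + 1) * r + s := by norm_cast

lemma exists_ceil_spiderCost_eq (α β s : ℕ) : ∃ r : ℕ, ⌈spiderCost α β s⌉ = 1 + α * s + r := by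
  have hpos : (0 : ℝ) < (β + 1 / 2) / (2 * s + 1) := by positivity
  have hlt : (α * s : ℤ) < ⌈spiderCost α β s⌉ := by
    rw [Int.lt_ceil, spiderCost]
    push_cast
    linarith
  obtain ⟨r, hr⟩ := Int.le.dest hlt
  exact ⟨r, by omega⟩

lemma spiderCost_sub_spiderCost (α β s S : ℕ) :
    spiderCost α β s - spiderCost α β S =
      (s - S) * (α * ((2 * s + 1) * (2 * S + 1)) - (2 * β + 1)) /
        ((2 * s + 1) * (2 * S + 1)) := by
  unfold spiderCost
  field_simp
  ring

/-- The hypotheses say that `α * (2 * S - 1) * (2 * S + 1) ≤ 2 * β + 1` and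
`2 * β + 1 < α * (2 * S + 1) * (2 * S + 3)`, i.e. that the cost does not increase from `S - 1` to
`S` and increases from `S` to `S + 1`. -/
lemma spiderCost_le_spiderCost {α β S : ℕ} (hle : 4 * α * S ^ 2 ≤ 2 * β + α + 1)
    (hlt : 2 * β + α + 1 < 4 * α * (S + 1) ^ 2) (s : ℕ) :
    spiderCost α β S ≤ spiderCost α β s := by
  have hle' : (4 * α * S ^ 2 : ℝ) ≤ 2 * β + α + 1 := by exact_mod_cast hle
  have hlt' : (2 * β + α + 1 : ℝ) < 4 * α * (S + 1) ^ 2 := by exact_mod_cast hlt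
  rw [← sub_nonneg, spiderCost_sub_spiderCost]
  refine div_nonneg ?_ (by positivity)
  rcases lt_trichotomy s S with h | rfl | h
  · have h : (s : ℝ) + 1 ≤ S := by exact_mod_cast h
    refine mul_nonneg_of_nonpos_of_nonpos (by linarith) (sub_nonpos.2 ?_)
    calc (α * ((2 * s + 1) * (2 * S + 1)) : ℝ) ≤ α * ((2 * S - 1) * (2 * S + 1)) := by
          gcongr
          linarith
      _ ≤ 2 * β + 1 := by linarith
  · simp
  · have h : (S : ℝ) + 1 ≤ s := by exact_mod_cast h
    refine mul_nonneg (by linarith) (sub_nonneg.2 ?_)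
    calc (2 * β + 1 : ℝ) ≤ α * ((2 * S + 3) * (2 * S + 1)) := by linarith
      _ ≤ α * ((2 * s + 1) * (2 * S + 1)) := by
          gcongr ?_ * (?_ * ?_)
          linarith

lemma exists_natCast_eq_sHat {α : ℕ} (hα : 0 < α) (β : ℕ) :
    ∃ S : ℕ, sHat α β = S ∧ 4 * α * S ^ 2 ≤ 2 * β + α + 1 ∧
      2 * β + α + 1 < 4 * α * (S + 1) ^ 2 := by
  have hα4 : (0 : ℝ) < 4 * α := by positivity
  have hnonneg : 0 ≤ sHat α β := Int.floor_nonneg.2 (Real.sqrt_nonneg _)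
  obtain ⟨S, hS⟩ := Int.eq_ofNat_of_zero_le hnonneg
  refine ⟨S, hS, ?_⟩
  unfold sHat at hS
  rw [Int.floor_eq_iff] at hS
  push_cast at hS
  obtain ⟨hle, hlt⟩ := hS
  rw [Real.le_sqrt (by positivity) (by positivity), le_div_iff₀ hα4] at hle
  rw [Real.sqrt_lt' (by positivity), div_lt_iff₀ hα4] at hlt
  rify
  exact ⟨by linarith, by linarith⟩

lemma exists_tS_eq_spiderCost {α : ℕ} (hα : 0 < α) (β : ℕ) :
    ∃ S : ℕ, tS α β = spiderCost α β S ∧ ∀ s, spiderCost α β S ≤ spiderCost α β s := by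
  obtain ⟨S, hS, hle, hlt⟩ := exists_natCast_eq_sHat hα β
  exact ⟨S, by simp [tS, hS, spiderCost], spiderCost_le_spiderCost hle hlt⟩

/-- For all integers `α ≥ 3` and `β ≥ 1`, `th₊(T_{α,β}) = ⌈t_S(α,β)⌉`. -/
theorem stmt12 (α β : ℕ) (hα : 3 ≤ α) (hβ : 1 ≤ β) :
    (psdTh (balancedSpider α β) : ℤ) = ⌈tS (α : ℤ) (β : ℝ)⌉ := by
  obtain ⟨S, htS, hmin⟩ := exists_tS_eq_spiderCost (by omega : 0 < α) β
  obtain ⟨⟨s, r, hsr, hth⟩, hle⟩ := isLeast_psdTh_balancedSpider hα β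
  rw [htS]
  apply le_antisymm
  · obtain ⟨r₀, hr₀⟩ := exists_ceil_spiderCost_eq α β S
    have hcost : spiderCost α β S ≤ 1 + α * S + r₀ := by
      exact_mod_cast hr₀ ▸ Int.le_ceil (spiderCost α β S)
    rw [hr₀]
    exact_mod_cast hle ⟨S, r₀, spiderCost_le_iff.1 hcost, rfl⟩
  · rw [hth, Int.ceil_le]
    push_cast
    exact (hmin s).trans (spiderCost_le_iff.2 hsr)
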